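/- (Cascade of two geometrically ISS systems is ISS.) Let n₁, n₂, m ∈ ℕ be positive, let x¹ : ℕ → ℝ^{n₁}, x² : ℕ → ℝ^{n₂}, u : ℕ → ℝ^m, and let a₁, a₂ ∈ [0,1), c₁, c₂, d₁, d₂ ≥ 0. Suppose that for all k ∈ ℕ: ‖x¹_{k+1}‖∞ ≤ a₁ ‖x¹_k‖∞ + c₁ ‖u_k‖∞ + d₁ and ‖x²_{k+1}‖∞ ≤ a₂ ‖x²_k‖∞ + c₂ ‖x¹_{k+1}‖∞ + d₂ (the second system is driven by the state of the first). Then there exist a constant C ≥ 0 and λ ∈ [0,1), depending only on a₁, a₂, c₁, c₂, such that for all k ∈ ℕ: max(‖x¹_k‖∞, ‖x²_k‖∞) ≤ C λ^k (‖x¹_0‖∞ + ‖x²_0‖∞) + C ( max_{0≤h<k} ‖u_h‖∞ + d₁ + d₂ ), where the term max_{0≤h<k} ‖u_h‖∞ is interpreted as 0 when k = 0. -/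

import Mathlib

/-!
Fix `lam < 1` strictly larger than the decay rates of both layers. If the weight `w` is large
enough, the Lyapunov function `w * ‖x₁‖ + ‖x₂‖` contracts with rate `lam` up to a disturbance: the
gap between `lam` and the first rate absorbs the coupling of the second layer to the first. The
one-step estimate then iterates to a geometric series, with the input replaced by its running
maximum over the finite horizon.
-/

section OrderedRing

variable {R : Type*}

theorem le_arithGeom [Semiring R] [PartialOrder R] [IsOrderedRing R] {u : ℕ → R} {a b : R}
    (ha : 0 ≤ a) (n : ℕ) (hu : ∀ k < n, u (k + 1) ≤ a * u k + b) :
    u n ≤ arithGeom a b (u 0) n := by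
  have hmono : Monotone fun t : R ↦ a * t + b := fun s t hst ↦ by
    dsimp only
    gcongr
  exact hmono.seq_le_seq n le_rfl hu fun k _ ↦ (arithGeom_succ k).ge

theorem weighted_add_step_le [CommRing R] [PartialOrder R] [IsOrderedRing R]
    {a₁ a₂ b₁ b₂ c w lam x x' y y' : R} (hwc : 0 ≤ w + c) (hw : (w + c) * a₁ ≤ lam * w)
    (ha₂ : a₂ ≤ lam) (hx : 0 ≤ x) (hy : 0 ≤ y)
    (hx' : x' ≤ a₁ * x + b₁) (hy' : y' ≤ a₂ * y + c * x' + b₂) :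
    w * x' + y' ≤ lam * (w * x + y) + ((w + c) * b₁ + b₂) :=
  calc
    w * x' + y' ≤ w * x' + (a₂ * y + c * x' + b₂) := by gcongr
    _ = (w + c) * x' + a₂ * y + b₂ := by ring
    _ ≤ (w + c) * (a₁ * x + b₁) + lam * y + b₂ := by gcongr
    _ = (w + c) * a₁ * x + lam * y + ((w + c) * b₁ + b₂) := by ring
    _ ≤ lam * w * x + lam * y + ((w + c) * b₁ + b₂) := by gcongr
    _ = lam * (w * x + y) + ((w + c) * b₁ + b₂) := by ring

theorem mul_mul_add_add_le_mul_one_add_mul [CommSemiring R] [PartialOrder R] [IsOrderedRing R]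
    {c g s d₁ d₂ : R} (hc : 0 ≤ c) (hg : 1 ≤ g) (hs : 0 ≤ s) (hd₁ : 0 ≤ d₁) (hd₂ : 0 ≤ d₂) :
    g * (c * s + d₁) + d₂ ≤ g * (1 + c) * (s + d₁ + d₂) := by
  have hg₀ : 0 ≤ g := zero_le_one.trans hg
  calc
    g * (c * s + d₁) + d₂ ≤ g * (c * s + d₁) + g * d₂ := by
      gcongr
      exact le_mul_of_one_le_left hd₂ hg
    _ ≤ g * (c * s + d₁) + g * d₂ + g * (s + c * (d₁ + d₂)) :=
      le_add_of_nonneg_right (by positivity)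
    _ = g * (1 + c) * (s + d₁ + d₂) := by ring

end OrderedRing

section OrderedField

variable {K : Type*} [Field K] [LinearOrder K] [IsStrictOrderedRing K]

theorem le_pow_mul_add_div_one_sub {u : ℕ → K} {a b : K} (ha₀ : 0 ≤ a) (ha₁ : a < 1)
    (hb : 0 ≤ b) (n : ℕ) (hu : ∀ k < n, u (k + 1) ≤ a * u k + b) :
    u n ≤ a ^ n * u 0 + b / (1 - a) := by
  have htail : 0 ≤ a ^ n * (b / (1 - a)) :=
    mul_nonneg (pow_nonneg ha₀ n) (div_nonneg hb (sub_nonneg.2 ha₁.le))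
  calc
    u n ≤ arithGeom a b (u 0) n := le_arithGeom ha₀ n hu
    _ = a ^ n * u 0 + b / (1 - a) - a ^ n * (b / (1 - a)) := by rw [arithGeom_eq ha₁.ne]; ring
    _ ≤ a ^ n * u 0 + b / (1 - a) := sub_le_self _ htail

theorem exists_one_le_add_mul_le {a c lam : K} (ha : a < lam) (hlam : lam ≤ 1) (hc : 0 ≤ c) :
    ∃ w, 1 ≤ w ∧ (w + c) * a ≤ lam * w := by
  have hgap : 0 < lam - a := sub_pos.2 ha
  refine ⟨1 + c / (lam - a), le_add_of_nonneg_right (div_nonneg hc hgap.le), ?_⟩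
  have hcancel : (lam - a) * (c / (lam - a)) = c := mul_div_cancel₀ c hgap.ne'
  have hca : c * a ≤ c := mul_le_of_le_one_right hc (ha.le.trans hlam)
  linarith

theorem weighted_add_le_of_cascade {a₁ a₂ b₁ b₂ c w lam : K} {x y : ℕ → K}
    (hlam₀ : 0 ≤ lam) (hlam₁ : lam < 1) (hwc : 0 ≤ w + c) (hw : (w + c) * a₁ ≤ lam * w)
    (ha₂ : a₂ ≤ lam) (hb₁ : 0 ≤ b₁) (hb₂ : 0 ≤ b₂) (hx₀ : ∀ k, 0 ≤ x k) (hy₀ : ∀ k, 0 ≤ y k)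
    (n : ℕ) (hx : ∀ k < n, x (k + 1) ≤ a₁ * x k + b₁)
    (hy : ∀ k < n, y (k + 1) ≤ a₂ * y k + c * x (k + 1) + b₂) :
    w * x n + y n ≤ lam ^ n * (w * x 0 + y 0) + ((w + c) * b₁ + b₂) / (1 - lam) :=
  le_pow_mul_add_div_one_sub (u := fun k ↦ w * x k + y k) hlam₀ hlam₁
    (add_nonneg (mul_nonneg hwc hb₁) hb₂) n fun k hk ↦
      weighted_add_step_le hwc hw ha₂ (hx₀ k) (hy₀ k) (hx k hk) (hy k hk)

theorem exists_cascade_bound {a₁ a₂ c₁ c₂ : K} (ha₁ : a₁ < 1) (ha₂ : a₂ < 1)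
    (hc₁ : 0 ≤ c₁) (hc₂ : 0 ≤ c₂) :
    ∃ C lam : K, 0 ≤ C ∧ 0 ≤ lam ∧ lam < 1 ∧
      ∀ (s d₁ d₂ : K), 0 ≤ s → 0 ≤ d₁ → 0 ≤ d₂ →
      ∀ (x y : ℕ → K), (∀ k, 0 ≤ x k) → (∀ k, 0 ≤ y k) →
      ∀ n, (∀ k < n, x (k + 1) ≤ a₁ * x k + (c₁ * s + d₁)) →
        (∀ k < n, y (k + 1) ≤ a₂ * y k + c₂ * x (k + 1) + d₂) →
        max (x n) (y n) ≤ C * lam ^ n * (x 0 + y 0) + C * (s + d₁ + d₂) := by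
  obtain ⟨lam, hlam, hlam₁⟩ := exists_between (max_lt zero_lt_one (max_lt ha₁ ha₂))
  obtain ⟨hlam₀, ha₁lam, ha₂lam⟩ : 0 < lam ∧ a₁ < lam ∧ a₂ < lam := by
    simpa only [max_lt_iff] using hlam
  obtain ⟨w, hw₁, hw⟩ := exists_one_le_add_mul_le ha₁lam hlam₁.le hc₂
  have hw₀ : 0 ≤ w := zero_le_one.trans hw₁
  set G := (w + c₂) * (1 + c₁) / (1 - lam) with hG
  refine ⟨max w G, lam, le_max_of_le_left hw₀, hlam₀.le, hlam₁, ?_⟩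
  intro s d₁ d₂ hs hd₁ hd₂ x y hx₀ hy₀ n hx hy
  have hinit : w * x 0 + y 0 ≤ w * (x 0 + y 0) := by
    rw [mul_add]
    gcongr
    exact le_mul_of_one_le_left (hy₀ 0) hw₁
  have hgain : ((w + c₂) * (c₁ * s + d₁) + d₂) / (1 - lam) ≤ G * (s + d₁ + d₂) := by
    rw [hG, div_mul_eq_mul_div]
    refine div_le_div_of_nonneg_right ?_ (sub_nonneg.2 hlam₁.le)
    exact mul_mul_add_add_le_mul_one_add_mul hc₁ (le_add_of_le_of_nonneg hw₁ hc₂) hs hd₁ hd₂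
  calc
    max (x n) (y n) ≤ w * x n + y n :=
      max_le ((le_mul_of_one_le_left (hx₀ n) hw₁).trans (le_add_of_nonneg_right (hy₀ n)))
        (le_add_of_nonneg_left (mul_nonneg hw₀ (hx₀ n)))
    _ ≤ lam ^ n * (w * x 0 + y 0) + ((w + c₂) * (c₁ * s + d₁) + d₂) / (1 - lam) :=
      weighted_add_le_of_cascade hlam₀.le hlam₁ (add_nonneg hw₀ hc₂) hw ha₂lam.le
        (by positivity) hd₂ hx₀ hy₀ n hx hy
    _ ≤ lam ^ n * (w * (x 0 + y 0)) + G * (s + d₁ + d₂) := by gcongr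
    _ = w * lam ^ n * (x 0 + y 0) + G * (s + d₁ + d₂) := by ring
    _ ≤ max w G * lam ^ n * (x 0 + y 0) + max w G * (s + d₁ + d₂) := by
      have hxy : 0 ≤ x 0 + y 0 := add_nonneg (hx₀ 0) (hy₀ 0)
      gcongr
      · exact le_max_left w G
      · exact le_max_right w G

end OrderedField

theorem norm_le_coe_sup_nnnorm {ι E : Type*} [SeminormedAddGroup E] (u : ι → E) {s : Finset ι}
    {i : ι} (hi : i ∈ s) : ‖u i‖ ≤ ((s.sup fun j ↦ ‖u j‖₊ : NNReal) : ℝ) :=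
  NNReal.coe_le_coe.2 (Finset.le_sup (f := fun j ↦ ‖u j‖₊) hi)

theorem cascade_iss_general {a₁ a₂ c₁ c₂ : ℝ} (ha₁ : a₁ < 1) (ha₂ : a₂ < 1)
    (hc₁ : 0 ≤ c₁) (hc₂ : 0 ≤ c₂) :
    ∃ C lam : ℝ, 0 ≤ C ∧ 0 ≤ lam ∧ lam < 1 ∧
      ∀ (E₁ E₂ F : Type*) [SeminormedAddGroup E₁] [SeminormedAddGroup E₂] [SeminormedAddGroup F],
      ∀ (d₁ d₂ : ℝ), 0 ≤ d₁ → 0 ≤ d₂ →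
      ∀ (x₁ : ℕ → E₁) (x₂ : ℕ → E₂) (u : ℕ → F),
        (∀ k, ‖x₁ (k + 1)‖ ≤ a₁ * ‖x₁ k‖ + c₁ * ‖u k‖ + d₁) →
        (∀ k, ‖x₂ (k + 1)‖ ≤ a₂ * ‖x₂ k‖ + c₂ * ‖x₁ (k + 1)‖ + d₂) →
        ∀ k, max ‖x₁ k‖ ‖x₂ k‖
          ≤ C * lam ^ k * (‖x₁ 0‖ + ‖x₂ 0‖)
            + C * ((((Finset.range k).sup fun j ↦ ‖u j‖₊ : NNReal) : ℝ) + d₁ + d₂) := by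
  obtain ⟨C, lam, hC, hlam₀, hlam₁, hbound⟩ := exists_cascade_bound ha₁ ha₂ hc₁ hc₂
  refine ⟨C, lam, hC, hlam₀, hlam₁, ?_⟩
  intro E₁ E₂ F _ _ _ d₁ d₂ hd₁ hd₂ x₁ x₂ u hx₁ hx₂ k
  refine hbound _ d₁ d₂ (NNReal.coe_nonneg _) hd₁ hd₂ (‖x₁ ·‖) (‖x₂ ·‖) (fun _ ↦ norm_nonneg _)
    (fun _ ↦ norm_nonneg _) k (fun j hj ↦ ?_) fun j _ ↦ hx₂ j
  have hu : ‖u j‖ ≤ (((Finset.range k).sup fun i ↦ ‖u i‖₊ : NNReal) : ℝ) :=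
    norm_le_coe_sup_nnnorm u (Finset.mem_range.2 hj)
  calc
    ‖x₁ (j + 1)‖ ≤ a₁ * ‖x₁ j‖ + (c₁ * ‖u j‖ + d₁) := (hx₁ j).trans_eq (add_assoc _ _ _)
    _ ≤ a₁ * ‖x₁ j‖ + (c₁ * (((Finset.range k).sup fun i ↦ ‖u i‖₊ : NNReal) : ℝ) + d₁) := by
      gcongr

/-- a cascade of two geometrically ISS systems is ISS. The constants
`C` and `λ` depend only on `a₁, a₂, c₁, c₂`, whence the existential quantifier
precedes the dimensions, the disturbance bounds `d₁, d₂`, and the trajectories.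
The maximum of the input norms over the empty range (`k = 0`) is `0`. -/
theorem cascade_iss (a1 a2 c1 c2 : ℝ)
    (ha10 : 0 ≤ a1) (ha11 : a1 < 1) (ha20 : 0 ≤ a2) (ha21 : a2 < 1)
    (hc1 : 0 ≤ c1) (hc2 : 0 ≤ c2) :
    ∃ C lam : ℝ, 0 ≤ C ∧ 0 ≤ lam ∧ lam < 1 ∧
      ∀ (n1 n2 m : ℕ), 0 < n1 → 0 < n2 → 0 < m →
      ∀ (d1 d2 : ℝ), 0 ≤ d1 → 0 ≤ d2 →
      ∀ (x1 : ℕ → Fin n1 → ℝ) (x2 : ℕ → Fin n2 → ℝ) (u : ℕ → Fin m → ℝ),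
        (∀ k, ‖x1 (k + 1)‖ ≤ a1 * ‖x1 k‖ + c1 * ‖u k‖ + d1) →
        (∀ k, ‖x2 (k + 1)‖ ≤ a2 * ‖x2 k‖ + c2 * ‖x1 (k + 1)‖ + d2) →
        ∀ k, max ‖x1 k‖ ‖x2 k‖
          ≤ C * lam ^ k * (‖x1 0‖ + ‖x2 0‖)
            + C * ((((Finset.range k).sup fun j => ‖u j‖₊ : NNReal) : ℝ) + d1 + d2) := by
  obtain ⟨C, lam, hC, hlam₀, hlam₁, hiss⟩ := cascade_iss_general ha11 ha21 hc1 hc2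
  exact ⟨C, lam, hC, hlam₀, hlam₁, fun n1 n2 m _ _ _ ↦ hiss (Fin n1 → ℝ) (Fin n2 → ℝ) (Fin m → ℝ)⟩
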